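/- arXiv:math/0506272 — 2 statements merged into one kernel-verified Lean document; each statement's English description precedes it below -/
import Mathlib

section
/- Let H be a quasi-bialgebra and let A be a left H-module equipped with a k-bilinear multiplication. Define a multiplication on the vector space A⊗H by (a⊗h)(a′⊗h′) = (x¹·a)(x²h₁·a′) ⊗ x³h₂h′, where Φ⁻¹ = x¹⊗x²⊗x³, and assume this multiplication is associative. If moreover A has a unit 1_A satisfying h·1_A = ε(h)1_A for all h ∈ H, then h·(ab) = (h₁·a)(h₂·b) for all h ∈ H and a, b ∈ A; consequently A is a left H-module algebra and the above multiplication on A⊗H is that of the smash product A#H. -/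
/-!
Applying `ε ⊗ ε ⊗ id ⊗ id` and `id ⊗ id ⊗ ε ⊗ ε` to the pentagon shows that `(ε ⊗ id ⊗ id)(Φ)` and
`(id ⊗ id ⊗ ε)(Φ)` are idempotent; being invertible, they are `1`, and so are the corresponding
contractions of `Φ⁻¹`. Consequently the multiplication of `A ⊗ H` satisfies
`(1_A ⊗ h) w = Δ(h) · w` and, with `π = id ⊗ ε : A ⊗ H → A`, `π((a ⊗ h) w) = a (h · π(w))`.
Applying `π` to associativity at `1_A ⊗ h`, `a ⊗ 1`, `b ⊗ 1` gives `h · (ab) = (h₁ · a)(h₂ · b)`.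
Applying it at `a ⊗ 1`, `b ⊗ 1`, `c ⊗ 1` gives `((x¹ · a)(x² · b))(x³ · c) = a(bc)`, in which
`Φ⁻¹` is moved to the other side by letting `Φ` act on `a ⊗ b ⊗ c`.
-/

open TensorProduct BigOperators

/-- A quasi-bialgebra in the sense of Drinfeld. -/
structure QuasiBialgebra (k H : Type*) [Field k] [Ring H] [Algebra k H] where
  comul : H →ₐ[k] H ⊗[k] H
  counit : H →ₐ[k] k
  Phi : H ⊗[k] (H ⊗[k] H)
  PhiInv : H ⊗[k] (H ⊗[k] H)
  Phi_mul_inv : Phi * PhiInv = 1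
  inv_mul_Phi : PhiInv * Phi = 1
  comul_coassoc : ∀ h : H,
    (Algebra.TensorProduct.map (AlgHom.id k H) comul) (comul h)
      = Phi * (Algebra.TensorProduct.assoc k k k H H H)
          ((Algebra.TensorProduct.map comul (AlgHom.id k H)) (comul h)) * PhiInv
  counit_comul_right : ∀ h : H,
    (Algebra.TensorProduct.map (AlgHom.id k H) counit) (comul h) = h ⊗ₜ[k] (1 : k)
  counit_comul_left : ∀ h : H,
    (Algebra.TensorProduct.map counit (AlgHom.id k H)) (comul h) = (1 : k) ⊗ₜ[k] h
  pentagon :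
    ((1 : H) ⊗ₜ[k] Phi)
      * (Algebra.TensorProduct.map (AlgHom.id k H)
          (((Algebra.TensorProduct.assoc k k k H H H).toAlgHom).comp
            (Algebra.TensorProduct.map comul (AlgHom.id k H)))) Phi
      * (Algebra.TensorProduct.map (AlgHom.id k H)
          (Algebra.TensorProduct.map (AlgHom.id k H)
            (Algebra.TensorProduct.includeLeft : H →ₐ[k] H ⊗[k] H))) Phi
    = (Algebra.TensorProduct.map (AlgHom.id k H)
          (Algebra.TensorProduct.map (AlgHom.id k H) comul)) Phi
      * (Algebra.TensorProduct.assoc k k k H H (H ⊗[k] H))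
          ((Algebra.TensorProduct.map comul (AlgHom.id k (H ⊗[k] H))) Phi)
  counit_Phi : (Algebra.TensorProduct.map (AlgHom.id k H)
      (Algebra.TensorProduct.map counit (AlgHom.id k H))) Phi = 1

/-- A quasi-Hopf algebra: a quasi-bialgebra with antipode `S` (a bijective algebra
anti-automorphism with inverse `Sinv`) and elements `alpha`, `beta`, normalized so that
`counit alpha = counit beta = 1`.  Identities involving Sweedler components are stated
universally over all finite representations of the relevant tensors. -/
structure QuasiHopfAlgebra (k H : Type*) [Field k] [Ring H] [Algebra k H] extends
    QuasiBialgebra k H where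
  alpha : H
  beta : H
  S : H →ₗ[k] H
  Sinv : H →ₗ[k] H
  S_one : S 1 = 1
  S_mul : ∀ a b : H, S (a * b) = S b * S a
  Sinv_S : ∀ h : H, Sinv (S h) = h
  S_Sinv : ∀ h : H, S (Sinv h) = h
  antipode_left : ∀ h : H, ∀ (n : ℕ) (d1 d2 : Fin n → H),
    comul h = ∑ i, d1 i ⊗ₜ[k] d2 i →
    ∑ i, S (d1 i) * alpha * d2 i = counit h • alpha
  antipode_right : ∀ h : H, ∀ (n : ℕ) (d1 d2 : Fin n → H),
    comul h = ∑ i, d1 i ⊗ₜ[k] d2 i →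
    ∑ i, d1 i * beta * S (d2 i) = counit h • beta
  antipode_Phi : ∀ (n : ℕ) (X1 X2 X3 : Fin n → H),
    Phi = ∑ i, X1 i ⊗ₜ[k] (X2 i ⊗ₜ[k] X3 i) →
    ∑ i, X1 i * beta * S (X2 i) * alpha * X3 i = 1
  antipode_PhiInv : ∀ (n : ℕ) (x1 x2 x3 : Fin n → H),
    PhiInv = ∑ i, x1 i ⊗ₜ[k] (x2 i ⊗ₜ[k] x3 i) →
    ∑ i, S (x1 i) * alpha * x2 i * beta * S (x3 i) = 1
  counit_alpha : counit alpha = 1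
  counit_beta : counit beta = 1

section TensorRepresentation

variable {k H K A B M : Type*} [CommSemiring k] [Semiring H] [Algebra k H]
  [Semiring K] [Algebra k K] [AddCommMonoid A] [Module k A] [AddCommMonoid B] [Module k B]
  [AddCommMonoid M] [Module k M]

theorem exists_sum_tmul_tmul_eq (t : A ⊗[k] (B ⊗[k] M)) :
    ∃ (n : ℕ) (x : Fin n → A) (y : Fin n → B) (z : Fin n → M),
      t = ∑ i, x i ⊗ₜ[k] (y i ⊗ₜ[k] z i) := by
  induction t with
  | zero => exact ⟨0, Fin.elim0, Fin.elim0, Fin.elim0, by simp⟩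
  | tmul a s =>
    obtain ⟨n, y, z, rfl⟩ := TensorProduct.exists_sum_tmul_eq s
    exact ⟨n, fun _ => a, y, z, tmul_sum _ _ _⟩
  | add s t hs ht =>
    obtain ⟨n, x, y, z, rfl⟩ := hs
    obtain ⟨m, x', y', z', rfl⟩ := ht
    exact ⟨n + m, Fin.append x x', Fin.append y y', Fin.append z z', by simp [Fin.sum_univ_add]⟩

/-- The outer tensor product of two representations: `H ⊗ K` acts on `A ⊗ B` factor by factor. -/
def tensorRep (ρ : H →ₐ[k] Module.End k A) (σ : K →ₐ[k] Module.End k B) :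
    H ⊗[k] K →ₐ[k] Module.End k (A ⊗[k] B) :=
  Module.endTensorEndAlgHom.comp (Algebra.TensorProduct.map ρ σ)

@[simp]
theorem tensorRep_tmul_tmul (ρ : H →ₐ[k] Module.End k A) (σ : K →ₐ[k] Module.End k B)
    (g : H) (h : K) (a : A) (b : B) :
    tensorRep ρ σ (g ⊗ₜ h) (a ⊗ₜ b) = ρ g a ⊗ₜ σ h b :=
  rfl

/-- The multiplication `μ` of `A` applied to the first two factors of `A ⊗ (A ⊗ M)`. -/
def mulFst (μ : A →ₗ[k] A →ₗ[k] A) (M : Type*) [AddCommMonoid M] [Module k M] :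
    A ⊗[k] (A ⊗[k] M) →ₗ[k] A ⊗[k] M :=
  (lift μ).rTensor M ∘ₗ (TensorProduct.assoc k A A M).symm.toLinearMap

@[simp]
theorem mulFst_tmul_tmul (μ : A →ₗ[k] A →ₗ[k] A) (a b : A) (m : M) :
    mulFst μ M (a ⊗ₜ (b ⊗ₜ m)) = μ a b ⊗ₜ m :=
  rfl

theorem lTensor_flip_tensorRep_lmul (ρ : K →ₐ[k] Module.End k A) (σ : H →ₐ[k] Module.End k B)
    (t : K ⊗[k] H) (a : A) (b : B) :
    (σ.toLinearMap.flip b).lTensor A (tensorRep ρ (Algebra.lmul k H) t (a ⊗ₜ 1))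
      = tensorRep ρ σ t (a ⊗ₜ b) := by
  induction t with
  | zero => simp
  | tmul g h => simp
  | add s t hs ht => simp only [map_add, LinearMap.add_apply, hs, ht]

theorem lTensor_mulFst {N : Type*} [AddCommMonoid N] [Module k N] (μ : A →ₗ[k] A →ₗ[k] A)
    (f : M →ₗ[k] N) (w : A ⊗[k] (A ⊗[k] M)) :
    f.lTensor A (mulFst μ M w) = mulFst μ N ((f.lTensor A).lTensor A w) := by
  suffices h : f.lTensor A ∘ₗ mulFst μ M = mulFst μ N ∘ₗ (f.lTensor A).lTensor A from
    LinearMap.congr_fun h w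
  ext
  simp

theorem mulFst_unit_tmul {μ : A →ₗ[k] A →ₗ[k] A} {e : A} (unit_mul : ∀ a, μ e a = a)
    (w : A ⊗[k] M) : mulFst μ M (e ⊗ₜ w) = w := by
  induction w with
  | zero => simp
  | tmul a m => simp [unit_mul]
  | add v w hv hw => simp only [tmul_add, map_add, hv, hw]

end TensorRepresentation

section Counit

variable {k H K L A B : Type*} [CommSemiring k] [Semiring H] [Algebra k H] [Semiring K]
  [Algebra k K] [Semiring L] [Algebra k L] [AddCommMonoid A] [Module k A] [AddCommMonoid B]
  [Module k B] (ε : H →ₐ[k] k)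

/-- The algebra map `ε ⊗ id : H ⊗ K → K`. -/
def counitLeft (K : Type*) [Semiring K] [Algebra k K] : H ⊗[k] K →ₐ[k] K :=
  (Algebra.TensorProduct.lid k K).toAlgHom.comp (Algebra.TensorProduct.map ε (AlgHom.id k K))

/-- The algebra map `id ⊗ ε : K ⊗ H → K`. -/
def counitRight (K : Type*) [Semiring K] [Algebra k K] : K ⊗[k] H →ₐ[k] K :=
  (Algebra.TensorProduct.rid k k K).toAlgHom.comp (Algebra.TensorProduct.map (AlgHom.id k K) ε)

/-- The linear map `id ⊗ ε : A ⊗ H → A` for a module `A`. -/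
def counitProj (A : Type*) [AddCommMonoid A] [Module k A] : A ⊗[k] H →ₗ[k] A :=
  (TensorProduct.rid k A).toLinearMap ∘ₗ ε.toLinearMap.lTensor A

@[simp]
theorem counitLeft_tmul (h : H) (x : K) : counitLeft ε K (h ⊗ₜ x) = ε h • x := by
  simp [counitLeft]

@[simp]
theorem counitRight_tmul (x : K) (h : H) : counitRight ε K (x ⊗ₜ h) = ε h • x := by
  simp [counitRight]

@[simp]
theorem counitProj_tmul (a : A) (h : H) : counitProj ε A (a ⊗ₜ h) = ε h • a := by
  simp [counitProj]

theorem counitLeft_map_id (f : K →ₐ[k] L) (t : H ⊗[k] K) :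
    counitLeft ε L (Algebra.TensorProduct.map (AlgHom.id k H) f t) = f (counitLeft ε K t) := by
  induction t with
  | zero => simp
  | tmul h x => simp
  | add s t hs ht => simp only [map_add, hs, ht]

theorem counitProj_tensorRep (ρ : K →ₐ[k] Module.End k A) (t : K ⊗[k] H) (w : A ⊗[k] H) :
    counitProj ε A (tensorRep ρ (Algebra.lmul k H) t w)
      = ρ (counitRight ε K t) (counitProj ε A w) := by
  induction t with
  | zero => simp
  | add s t hs ht => simp only [map_add, LinearMap.add_apply, hs, ht]
  | tmul x g =>
    induction w with
    | zero => simp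
    | add v w hv hw => simp only [map_add, hv, hw]
    | tmul a h => simp [mul_smul, smul_comm (ε h)]

theorem lTensor_counitProj_tensorRep (ρ : K →ₐ[k] Module.End k A) (σ : L →ₐ[k] Module.End k B)
    (t : K ⊗[k] (L ⊗[k] H)) (w : A ⊗[k] (B ⊗[k] H)) :
    (counitProj ε B).lTensor A (tensorRep ρ (tensorRep σ (Algebra.lmul k H)) t w)
      = tensorRep ρ σ (Algebra.TensorProduct.map (AlgHom.id k K) (counitRight ε L) t)
          ((counitProj ε B).lTensor A w) := by
  induction t with
  | zero => simp
  | add s t hs ht => simp only [map_add, LinearMap.add_apply, hs, ht]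
  | tmul g s =>
    induction w with
    | zero => simp
    | add v w hv hw => simp only [map_add, hv, hw]
    | tmul a w => simp [counitProj_tensorRep]

theorem counitProj_mulFst (μ : A →ₗ[k] A →ₗ[k] A) (w : A ⊗[k] (A ⊗[k] H)) :
    counitProj ε A (mulFst μ H w) = lift μ ((counitProj ε A).lTensor A w) := by
  suffices h : counitProj ε A ∘ₗ mulFst μ H = lift μ ∘ₗ (counitProj ε A).lTensor A from
    LinearMap.congr_fun h w
  ext
  simp

theorem mulFst_tensorRep_unit_tmul {ρ : H →ₐ[k] Module.End k A} {μ : A →ₗ[k] A →ₗ[k] A} {e : A}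
    (unit_mul : ∀ a, μ e a = a) (rep_unit : ∀ h, ρ h e = ε h • e)
    (σ : K →ₐ[k] Module.End k (A ⊗[k] B)) (t : H ⊗[k] K) (w : A ⊗[k] B) :
    mulFst μ B (tensorRep ρ σ t (e ⊗ₜ w)) = σ (counitLeft ε K t) w := by
  induction t with
  | zero => simp
  | tmul h s => simp [rep_unit, ← smul_tmul', mulFst_unit_tmul unit_mul]
  | add s t hs ht => simp only [map_add, LinearMap.add_apply, hs, ht]

end Counit

namespace QuasiBialgebra

section Counit

variable {k H : Type*} [Field k] [Ring H] [Algebra k H] (Q : QuasiBialgebra k H)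

theorem counitLeft_comul (h : H) : counitLeft Q.counit H (Q.comul h) = h := by
  simp [counitLeft, Q.counit_comul_left]

theorem counitRight_comul (h : H) : counitRight Q.counit H (Q.comul h) = h := by
  simp [counitRight, Q.counit_comul_right]

theorem map_counitLeft_Phi :
    Algebra.TensorProduct.map (AlgHom.id k H) (counitLeft Q.counit H) Q.Phi = 1 := by
  have h := congrArg (Algebra.TensorProduct.map (AlgHom.id k H)
    (Algebra.TensorProduct.lid k H).toAlgHom) Q.counit_Phi
  rwa [map_one, ← AlgHom.comp_apply, ← Algebra.TensorProduct.map_id_comp] at h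

theorem counitLeft_counitLeft_Phi :
    counitLeft Q.counit H (counitLeft Q.counit (H ⊗[k] H) Q.Phi) = 1 := by
  rw [← counitLeft_map_id, map_counitLeft_Phi, map_one]

/-- The algebra map `id ⊗ id ⊗ ε : H ⊗ (H ⊗ H) → H ⊗ H`. -/
def counitThird : H ⊗[k] (H ⊗[k] H) →ₐ[k] H ⊗[k] H :=
  Algebra.TensorProduct.map (AlgHom.id k H) (counitRight Q.counit H)

theorem counitRight_counitThird_Phi :
    counitRight Q.counit H (Q.counitThird Q.Phi) = 1 := by
  have h : (counitRight Q.counit H).comp Q.counitThird = (counitRight Q.counit H).comp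
      (Algebra.TensorProduct.map (AlgHom.id k H) (counitLeft Q.counit H)) := by
    ext <;> simp [counitThird]
  rw [← AlgHom.comp_apply, h, AlgHom.comp_apply, map_counitLeft_Phi, map_one]

theorem counitLeft_assoc_map_comul (K : Type*) [Ring K] [Algebra k K] (t : H ⊗[k] K) :
    counitLeft Q.counit (H ⊗[k] K) (Algebra.TensorProduct.assoc k k k H H K
      (Algebra.TensorProduct.map Q.comul (AlgHom.id k K) t)) = t := by
  have counitLeft_assoc_tmul (s : H ⊗[k] H) (x : K) : counitLeft Q.counit (H ⊗[k] K)
      (Algebra.TensorProduct.assoc k k k H H K (s ⊗ₜ x)) = counitLeft Q.counit H s ⊗ₜ x := by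
    induction s with
    | zero => simp
    | tmul a b => simp [smul_tmul']
    | add s t hs ht => simp only [add_tmul, map_add, hs, ht]
  induction t with
  | zero => simp
  | tmul a x => simp [counitLeft_assoc_tmul, counitLeft_comul]
  | add s t hs ht => simp only [map_add, hs, ht]

theorem counitThird_assoc_tmul (s : H ⊗[k] H) (h : H) :
    Q.counitThird (Algebra.TensorProduct.assoc k k k H H H (s ⊗ₜ h)) = Q.counit h • s := by
  induction s with
  | zero => simp
  | tmul a b => simp [counitThird]
  | add s t hs ht => simp only [add_tmul, map_add, hs, ht, smul_add]

theorem counitThird_assoc_map_comul (t : H ⊗[k] H) :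
    Q.counitThird (Algebra.TensorProduct.assoc k k k H H H
      (Algebra.TensorProduct.map Q.comul (AlgHom.id k H) t))
      = Q.comul (counitRight Q.counit H t) := by
  induction t with
  | zero => simp
  | tmul a b => simp [counitThird_assoc_tmul]
  | add s t hs ht => simp only [map_add, hs, ht]

theorem map_counitThird_assoc_map_comul (t : H ⊗[k] (H ⊗[k] H)) :
    Algebra.TensorProduct.map (AlgHom.id k H) Q.counitThird
      (Algebra.TensorProduct.assoc k k k H H (H ⊗[k] H)
        (Algebra.TensorProduct.map Q.comul (AlgHom.id k (H ⊗[k] H)) t))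
      = Algebra.TensorProduct.assoc k k k H H H
        (Algebra.TensorProduct.map Q.comul (AlgHom.id k H) (Q.counitThird t)) := by
  have map_counitThird_assoc_tmul (s : H ⊗[k] H) (u : H ⊗[k] H) :
      Algebra.TensorProduct.map (AlgHom.id k H) Q.counitThird
        (Algebra.TensorProduct.assoc k k k H H (H ⊗[k] H) (s ⊗ₜ u))
        = Algebra.TensorProduct.assoc k k k H H H (s ⊗ₜ counitRight Q.counit H u) := by
    induction s with
    | zero => simp
    | tmul a b => simp [counitThird]
    | add s t hs ht => simp only [add_tmul, map_add, hs, ht]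
  induction t with
  | zero => simp
  | tmul a u => rw [Algebra.TensorProduct.map_tmul, map_counitThird_assoc_tmul]; simp [counitThird]
  | add s t hs ht => simp only [map_add, hs, ht]

theorem isUnit_Phi : IsUnit Q.Phi :=
  ⟨⟨Q.Phi, Q.PhiInv, Q.Phi_mul_inv, Q.inv_mul_Phi⟩, rfl⟩

theorem counitLeft_Phi : counitLeft Q.counit (H ⊗[k] H) Q.Phi = 1 := by
  have h := congrArg (fun t => counitLeft Q.counit (H ⊗[k] H)
    (counitLeft Q.counit (H ⊗[k] (H ⊗[k] H)) t)) Q.pentagon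
  simp only [map_mul, counitLeft_tmul, map_one, one_smul, counitLeft_map_id, mul_one, one_mul,
    counitLeft_counitLeft_Phi, counitLeft_assoc_map_comul, AlgHom.comp_apply,
    AlgEquiv.coe_toAlgHom] at h
  exact (IsIdempotentElem.iff_eq_one_of_isUnit (Q.isUnit_Phi.map _)).1 h

theorem counitThird_map_counitThird_map (f : H ⊗[k] H →ₐ[k] H ⊗[k] (H ⊗[k] H))
    (hf : ∀ t, counitRight Q.counit H (Q.counitThird (f t)) = counitRight Q.counit H t)
    (t : H ⊗[k] (H ⊗[k] H)) :
    Q.counitThird (Algebra.TensorProduct.map (AlgHom.id k H) Q.counitThird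
      (Algebra.TensorProduct.map (AlgHom.id k H) f t)) = Q.counitThird t := by
  have hf' : (counitRight Q.counit H).comp (Q.counitThird.comp f) = counitRight Q.counit H :=
    AlgHom.ext hf
  conv_rhs => rw [counitThird, ← hf']
  rw [Algebra.TensorProduct.map_id_comp, Algebra.TensorProduct.map_id_comp]
  rfl

theorem counitThird_map_includeLeft (t : H ⊗[k] H) :
    Q.counitThird (Algebra.TensorProduct.map (AlgHom.id k H)
      Algebra.TensorProduct.includeLeft t) = t := by
  induction t with
  | zero => simp
  | tmul a b => simp [counitThird]
  | add s t hs ht => simp only [map_add, hs, ht]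

theorem counitThird_map_comul (t : H ⊗[k] H) :
    Q.counitThird (Algebra.TensorProduct.map (AlgHom.id k H) Q.comul t) = t := by
  induction t with
  | zero => simp
  | tmul a b => simp [counitThird, counitRight_comul]
  | add s t hs ht => simp only [map_add, hs, ht]

theorem counitThird_Phi : Q.counitThird Q.Phi = 1 := by
  have h := congrArg (fun t => Q.counitThird
    (Algebra.TensorProduct.map (AlgHom.id k H) Q.counitThird t)) Q.pentagon
  have one_tmul : Q.counitThird (Algebra.TensorProduct.map (AlgHom.id k H) Q.counitThird
      (1 ⊗ₜ Q.Phi)) = 1 := by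
    rw [Algebra.TensorProduct.map_tmul, counitThird, Algebra.TensorProduct.map_tmul,
      ← counitThird, counitRight_counitThird_Phi, map_one, map_one, Algebra.TensorProduct.one_def]
  simp only [map_mul, map_counitThird_assoc_map_comul, counitThird_assoc_map_comul,
    counitRight_counitThird_Phi, map_one, one_tmul, one_mul, mul_one] at h
  rw [counitThird_map_counitThird_map, counitThird_map_counitThird_map,
    counitThird_map_counitThird_map] at h
  · exact (IsIdempotentElem.iff_eq_one_of_isUnit (Q.isUnit_Phi.map _)).1 h
  · simp [counitThird_map_comul]
  · simp [counitThird_map_includeLeft]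
  · intro t
    simp only [AlgHom.comp_apply, AlgEquiv.coe_toAlgHom, counitThird_assoc_map_comul,
      counitRight_comul]

theorem counitLeft_PhiInv : counitLeft Q.counit (H ⊗[k] H) Q.PhiInv = 1 := by
  simpa [counitLeft_Phi] using congrArg (counitLeft Q.counit (H ⊗[k] H)) Q.Phi_mul_inv

theorem counitThird_PhiInv : Q.counitThird Q.PhiInv = 1 := by
  simpa [counitThird_Phi] using congrArg Q.counitThird Q.Phi_mul_inv

end Counit

section Smash

variable {k H A : Type*} [Field k] [Ring H] [Algebra k H] [AddCommGroup A] [Module k A]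
  (Q : QuasiBialgebra k H) (ρ : H →ₐ[k] Module.End k A) (μ : A →ₗ[k] A →ₗ[k] A)

/-- The smash product multiplication `(a ⊗ h)(b ⊗ g) = (x¹ · a)(x²h₁ · b) ⊗ x³h₂g` on `A ⊗ H`,
for an action `ρ` of `H` on `A` and a multiplication `μ` of `A` not subject to any axioms. It is
encoded as: let `Δ(h)` act on `b ⊗ g`, then `Φ⁻¹` on `a ⊗ (b ⊗ g)`, with `H` acting on itself by
left multiplication, and multiply the two factors in `A`. -/
def smashMul : A ⊗[k] H →ₗ[k] A ⊗[k] H →ₗ[k] A ⊗[k] H :=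
  lift ((LinearMap.llcomp k (A ⊗[k] H) (A ⊗[k] H) (A ⊗[k] H)).compl₁₂
    ((TensorProduct.mk k A (A ⊗[k] H)).compr₂
      (mulFst μ H ∘ₗ tensorRep ρ (tensorRep ρ (Algebra.lmul k H)) Q.PhiInv))
    ((tensorRep ρ (Algebra.lmul k H)).toLinearMap ∘ₗ Q.comul.toLinearMap))

theorem smashMul_tmul (a : A) (h : H) (w : A ⊗[k] H) :
    Q.smashMul ρ μ (a ⊗ₜ h) w
      = mulFst μ H (tensorRep ρ (tensorRep ρ (Algebra.lmul k H)) Q.PhiInv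
          (a ⊗ₜ tensorRep ρ (Algebra.lmul k H) (Q.comul h) w)) :=
  rfl

theorem eq_smashMul (mulB : A ⊗[k] H →ₗ[k] A ⊗[k] H →ₗ[k] A ⊗[k] H)
    (hmulB : ∀ (a a' : A) (h h' : H) (n : ℕ) (x1 x2 x3 : Fin n → H),
      Q.PhiInv = ∑ i, x1 i ⊗ₜ[k] (x2 i ⊗ₜ[k] x3 i) →
      ∀ (m : ℕ) (d1 d2 : Fin m → H), Q.comul h = ∑ j, d1 j ⊗ₜ[k] d2 j →
      mulB (a ⊗ₜ[k] h) (a' ⊗ₜ[k] h')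
        = ∑ i, ∑ j, (μ (ρ (x1 i) a) (ρ (x2 i * d1 j) a')) ⊗ₜ[k] (x3 i * d2 j * h')) :
    mulB = Q.smashMul ρ μ := by
  obtain ⟨n, x1, x2, x3, hx⟩ := exists_sum_tmul_tmul_eq Q.PhiInv
  ext a h a' h'
  obtain ⟨m, d1, d2, hd⟩ := TensorProduct.exists_sum_tmul_eq (Q.comul h)
  simpa [smashMul_tmul, hx, hd, tmul_sum, mul_assoc, Finset.sum_comm (γ := Fin m)]
    using hmulB a a' h h' n x1 x2 x3 hx m d1 d2 hd

theorem counitProj_smashMul_tmul (a : A) (h : H) (w : A ⊗[k] H) :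
    counitProj Q.counit A (Q.smashMul ρ μ (a ⊗ₜ h) w)
      = μ a (ρ h (counitProj Q.counit A w)) := by
  rw [smashMul_tmul, counitProj_mulFst, lTensor_counitProj_tensorRep, ← counitThird,
    counitThird_PhiInv, map_one, Module.End.one_apply, LinearMap.lTensor_tmul, lift.tmul,
    counitProj_tensorRep, counitRight_comul]

theorem counitProj_smashMul_tmul_one (u : A ⊗[k] H) (b : A) :
    counitProj Q.counit A (Q.smashMul ρ μ u (b ⊗ₜ 1))
      = lift μ ((ρ.toLinearMap.flip b).lTensor A u) := by
  induction u with
  | zero => simp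
  | tmul a h => simp [counitProj_smashMul_tmul]
  | add u v hu hv => simp only [map_add, LinearMap.add_apply, hu, hv]

theorem smashMul_unit_tmul {e : A} (unit_mul : ∀ a, μ e a = a)
    (rep_unit : ∀ h, ρ h e = Q.counit h • e) (h : H) (w : A ⊗[k] H) :
    Q.smashMul ρ μ (e ⊗ₜ h) w = tensorRep ρ (Algebra.lmul k H) (Q.comul h) w := by
  rw [smashMul_tmul, mulFst_tensorRep_unit_tmul Q.counit unit_mul rep_unit, counitLeft_PhiInv,
    map_one, Module.End.one_apply]

theorem rep_mul_of_smashMul_assoc {e : A} (unit_mul : ∀ a, μ e a = a)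
    (rep_unit : ∀ h, ρ h e = Q.counit h • e)
    (assoc : ∀ u v w, Q.smashMul ρ μ (Q.smashMul ρ μ u v) w
      = Q.smashMul ρ μ u (Q.smashMul ρ μ v w)) (h : H) (a b : A) :
    ρ h (μ a b) = lift μ (tensorRep ρ ρ (Q.comul h) (a ⊗ₜ b)) := by
  calc ρ h (μ a b)
      = counitProj Q.counit A (Q.smashMul ρ μ (e ⊗ₜ h) (Q.smashMul ρ μ (a ⊗ₜ 1) (b ⊗ₜ 1))) := by
        simp [counitProj_smashMul_tmul, unit_mul]
    _ = counitProj Q.counit A (Q.smashMul ρ μ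
          (tensorRep ρ (Algebra.lmul k H) (Q.comul h) (a ⊗ₜ 1)) (b ⊗ₜ 1)) := by
        rw [← assoc, smashMul_unit_tmul Q ρ μ unit_mul rep_unit]
    _ = lift μ (tensorRep ρ ρ (Q.comul h) (a ⊗ₜ b)) := by
        rw [counitProj_smashMul_tmul_one, lTensor_flip_tensorRep_lmul]

theorem lTensor_flip_mulFst_tensorRep (t : H ⊗[k] (H ⊗[k] H)) (a b c : A) :
    (ρ.toLinearMap.flip c).lTensor A (mulFst μ H
      (tensorRep ρ (tensorRep ρ (Algebra.lmul k H)) t (a ⊗ₜ (b ⊗ₜ 1))))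
      = mulFst μ A (tensorRep ρ (tensorRep ρ ρ) t (a ⊗ₜ (b ⊗ₜ c))) := by
  rw [lTensor_mulFst]
  congr 1
  induction t with
  | zero => simp
  | tmul g s => simp [lTensor_flip_tensorRep_lmul]
  | add s t hs ht => simp only [map_add, LinearMap.add_apply, hs, ht]

theorem mulFst_tensorRep_PhiInv_of_smashMul_assoc
    (assoc : ∀ u v w, Q.smashMul ρ μ (Q.smashMul ρ μ u v) w
      = Q.smashMul ρ μ u (Q.smashMul ρ μ v w)) (v : A ⊗[k] (A ⊗[k] A)) :
    lift μ (mulFst μ A (tensorRep ρ (tensorRep ρ ρ) Q.PhiInv v))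
      = lift μ ((lift μ).lTensor A v) := by
  suffices h : lift μ ∘ₗ mulFst μ A ∘ₗ tensorRep ρ (tensorRep ρ ρ) Q.PhiInv
      = lift μ ∘ₗ (lift μ).lTensor A from LinearMap.congr_fun h v
  ext a b c
  have h := congrArg (counitProj Q.counit A) (assoc (a ⊗ₜ 1) (b ⊗ₜ 1) (c ⊗ₜ 1))
  rw [counitProj_smashMul_tmul_one, smashMul_tmul, map_one, map_one, Module.End.one_apply,
    lTensor_flip_mulFst_tensorRep] at h
  simpa [counitProj_smashMul_tmul] using h

theorem mul_mul_of_smashMul_assoc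
    (assoc : ∀ u v w, Q.smashMul ρ μ (Q.smashMul ρ μ u v) w
      = Q.smashMul ρ μ u (Q.smashMul ρ μ v w)) (a b c : A) :
    μ (μ a b) c
      = lift μ ((lift μ).lTensor A (tensorRep ρ (tensorRep ρ ρ) Q.Phi (a ⊗ₜ (b ⊗ₜ c)))) := by
  rw [← Q.mulFst_tensorRep_PhiInv_of_smashMul_assoc ρ μ assoc, ← Module.End.mul_apply, ← map_mul,
    Q.inv_mul_Phi, map_one, Module.End.one_apply, mulFst_tmul_tmul, lift.tmul]

end Smash

end QuasiBialgebra

theorem statement1_general {k H A : Type*} [Field k] [Ring H] [Algebra k H]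
    [AddCommGroup A] [Module k A] (Q : QuasiBialgebra k H)
    (act : H →ₗ[k] A →ₗ[k] A)
    (act_one : ∀ a : A, act 1 a = a)
    (act_mul : ∀ (g h : H) (a : A), act (g * h) a = act g (act h a))
    (mulA : A →ₗ[k] A →ₗ[k] A)
    (oneA : A)
    (one_mulA : ∀ a : A, mulA oneA a = a)
    (act_unit : ∀ h : H, act h oneA = Q.counit h • oneA)
    (mulB : (A ⊗[k] H) →ₗ[k] (A ⊗[k] H) →ₗ[k] (A ⊗[k] H))
    (hmulB : ∀ (a a' : A) (h h' : H) (n : ℕ) (x1 x2 x3 : Fin n → H),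
      Q.PhiInv = ∑ i, x1 i ⊗ₜ[k] (x2 i ⊗ₜ[k] x3 i) →
      ∀ (m : ℕ) (d1 d2 : Fin m → H), Q.comul h = ∑ j, d1 j ⊗ₜ[k] d2 j →
      mulB (a ⊗ₜ[k] h) (a' ⊗ₜ[k] h')
        = ∑ i, ∑ j, (mulA (act (x1 i) a) (act (x2 i * d1 j) a')) ⊗ₜ[k] (x3 i * d2 j * h'))
    (hassoc : ∀ u w z : A ⊗[k] H, mulB (mulB u w) z = mulB u (mulB w z)) :
    (∀ (h : H) (a b : A) (m : ℕ) (d1 d2 : Fin m → H),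
      Q.comul h = ∑ j, d1 j ⊗ₜ[k] d2 j →
      act h (mulA a b) = ∑ j, mulA (act (d1 j) a) (act (d2 j) b))
    ∧ (∀ (a b c : A) (n : ℕ) (X1 X2 X3 : Fin n → H),
      Q.Phi = ∑ i, X1 i ⊗ₜ[k] (X2 i ⊗ₜ[k] X3 i) →
      mulA (mulA a b) c
        = ∑ i, mulA (act (X1 i) a) (mulA (act (X2 i) b) (act (X3 i) c))) := by
  let ρ : H →ₐ[k] Module.End k A := AlgHom.ofLinearMap act (LinearMap.ext act_one)
    fun g h => LinearMap.ext (act_mul g h)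
  obtain rfl : mulB = Q.smashMul ρ mulA := Q.eq_smashMul ρ mulA mulB hmulB
  refine ⟨fun h a b m d1 d2 hd => ?_, fun a b c n X1 X2 X3 hX => ?_⟩
  · change ρ h (mulA a b) = ∑ j, mulA (ρ (d1 j) a) (ρ (d2 j) b)
    simp [Q.rep_mul_of_smashMul_assoc ρ mulA one_mulA act_unit hassoc, hd]
  · change _ = ∑ i, mulA (ρ (X1 i) a) (mulA (ρ (X2 i) b) (ρ (X3 i) c))
    simp [Q.mul_mul_of_smashMul_assoc ρ mulA hassoc, hX]

/-- If the smash-product-type multiplication on `A ⊗ H` is associative and `A` has a unit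
`1_A` with `h·1_A = ε(h)1_A`, then `h·(ab) = (h₁·a)(h₂·b)`; consequently `A` is a left
`H`-module algebra (it also satisfies the quasi-associativity constraint). -/
theorem statement1 {k H A : Type*} [Field k] [Ring H] [Algebra k H]
    [AddCommGroup A] [Module k A] (Q : QuasiBialgebra k H)
    (act : H →ₗ[k] A →ₗ[k] A)
    (act_one : ∀ a : A, act 1 a = a)
    (act_mul : ∀ (g h : H) (a : A), act (g * h) a = act g (act h a))
    (mulA : A →ₗ[k] A →ₗ[k] A)
    (oneA : A)
    (one_mulA : ∀ a : A, mulA oneA a = a)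
    (mulA_one : ∀ a : A, mulA a oneA = a)
    (act_unit : ∀ h : H, act h oneA = Q.counit h • oneA)
    (mulB : (A ⊗[k] H) →ₗ[k] (A ⊗[k] H) →ₗ[k] (A ⊗[k] H))
    (hmulB : ∀ (a a' : A) (h h' : H) (n : ℕ) (x1 x2 x3 : Fin n → H),
      Q.PhiInv = ∑ i, x1 i ⊗ₜ[k] (x2 i ⊗ₜ[k] x3 i) →
      ∀ (m : ℕ) (d1 d2 : Fin m → H), Q.comul h = ∑ j, d1 j ⊗ₜ[k] d2 j →
      mulB (a ⊗ₜ[k] h) (a' ⊗ₜ[k] h')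
        = ∑ i, ∑ j, (mulA (act (x1 i) a) (act (x2 i * d1 j) a')) ⊗ₜ[k] (x3 i * d2 j * h'))
    (hassoc : ∀ u w z : A ⊗[k] H, mulB (mulB u w) z = mulB u (mulB w z)) :
    (∀ (h : H) (a b : A) (m : ℕ) (d1 d2 : Fin m → H),
      Q.comul h = ∑ j, d1 j ⊗ₜ[k] d2 j →
      act h (mulA a b) = ∑ j, mulA (act (d1 j) a) (act (d2 j) b))
    ∧ (∀ (a b c : A) (n : ℕ) (X1 X2 X3 : Fin n → H),
      Q.Phi = ∑ i, X1 i ⊗ₜ[k] (X2 i ⊗ₜ[k] X3 i) →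
      mulA (mulA a b) c
        = ∑ i, mulA (act (X1 i) a) (mulA (act (X2 i) b) (act (X3 i) c))) :=
  statement1_general Q act act_one act_mul mulA oneA one_mulA act_unit mulB hmulB hassoc
end

section
/- Let H be a quasi-Hopf algebra. Then q¹₁t¹x¹ ⊗ q¹₍₂,₁₎t²₁z¹x² ⊗ q¹₍₂,₂₎t²₂z²βS(q²t³z³)x³ = 1⊗1⊗1 in H⊗H⊗H, where q_R = q¹⊗q² = X¹ ⊗ S⁻¹(αX³)X², and x¹⊗x²⊗x³, t¹⊗t²⊗t³, z¹⊗z²⊗z³ are three copies of Φ⁻¹. -/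
open TensorProduct BigOperators

/-!
Write `p_R = x¹ ⊗ x²βS(x³)` for the companion of `q_R`. Contracting the pentagon for `Φ⁻¹` by
`β` and `S` in its last two legs gives `t¹ ⊗ t²₁z¹ ⊗ t²₂z²βS(t³z³) = Φ (Δ ⊗ id)(p_R)`. By
quasi-coassociativity `(id ⊗ Δ)(Δ(q¹)) Φ = Φ (Δ ⊗ id)(Δ(q¹))`, so the left-hand side of the theorem
equals `Φ (Δ ⊗ id)(Δ(q¹) p_R (1 ⊗ S(q²))) Φ⁻¹`. Finally `Δ(q¹) p_R (1 ⊗ S(q²)) = 1 ⊗ 1` is the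
pentagon contracted by `a ⊗ b ⊗ c ↦ aβS(b)αc` in its last three legs.
-/

/-- The algebra map `id_H ⊗ f`, the algebra-homomorphism version of `LinearMap.lTensor`. -/
noncomputable abbrev lTensorAlgHom {k : Type*} (H : Type*) {A B : Type*} [CommSemiring k]
    [Semiring H] [Algebra k H] [Semiring A] [Algebra k A] [Semiring B] [Algebra k B]
    (f : A →ₐ[k] B) : H ⊗[k] A →ₐ[k] H ⊗[k] B :=
  Algebra.TensorProduct.map (AlgHom.id k H) f

section LTensor

variable {k H A B C : Type*} [CommSemiring k] [Semiring H] [Algebra k H] [Semiring A]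
  [Algebra k A] [Semiring B] [Algebra k B] [Semiring C] [Algebra k C]

theorem lTensorAlgHom_id : lTensorAlgHom H (AlgHom.id k A) = AlgHom.id k (H ⊗[k] A) :=
  Algebra.TensorProduct.map_id

theorem lTensorAlgHom_lTensorAlgHom (g : B →ₐ[k] C) (f : A →ₐ[k] B) (u : H ⊗[k] A) :
    lTensorAlgHom H g (lTensorAlgHom H f u) = lTensorAlgHom H (g.comp f) u :=
  (DFunLike.congr_fun (Algebra.TensorProduct.map_id_comp g f) u).symm

theorem lTensor_map_mul {f : A →ₗ[k] B} {g : C →ₐ[k] A} {g' : C →ₐ[k] B}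
    (hf : ∀ c a, f (g c * a) = g' c * f a) (u : H ⊗[k] C) (w : H ⊗[k] A) :
    f.lTensor H (lTensorAlgHom H g u * w) = lTensorAlgHom H g' u * f.lTensor H w := by
  induction u with
  | zero => simp
  | add u v hu hv => simp only [map_add, add_mul, hu, hv]
  | tmul h c =>
    induction w with
    | zero => simp
    | add v w hv hw => simp only [map_add, mul_add, hv, hw]
    | tmul h' a => simp [hf]

theorem lTensor_mul_map {f : A →ₗ[k] B} {g : C →ₐ[k] A} {g' : C →ₐ[k] B}
    (hf : ∀ a c, f (a * g c) = f a * g' c) (w : H ⊗[k] A) (u : H ⊗[k] C) :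
    f.lTensor H (w * lTensorAlgHom H g u) = f.lTensor H w * lTensorAlgHom H g' u := by
  induction u with
  | zero => simp
  | add u v hu hv => simp only [map_add, mul_add, hu, hv]
  | tmul h c =>
    induction w with
    | zero => simp
    | add v w hv hw => simp only [map_add, add_mul, hv, hw]
    | tmul h' a => simp [hf]

end LTensor

theorem exists_sum_tmul_tmul_eq_s3 {k M N P : Type*} [CommSemiring k] [AddCommMonoid M] [Module k M]
    [AddCommMonoid N] [Module k N] [AddCommMonoid P] [Module k P] (w : M ⊗[k] (N ⊗[k] P)) :
    ∃ (n : ℕ) (a : Fin n → M) (b : Fin n → N) (c : Fin n → P),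
      w = ∑ i, a i ⊗ₜ[k] (b i ⊗ₜ[k] c i) := by
  induction w with
  | zero => exact ⟨0, Fin.elim0, Fin.elim0, Fin.elim0, by simp⟩
  | tmul a v =>
    obtain ⟨n, b, c, rfl⟩ := TensorProduct.exists_sum_tmul_eq v
    exact ⟨n, fun _ ↦ a, b, c, TensorProduct.tmul_sum ..⟩
  | add v w hv hw =>
    obtain ⟨m, a, b, c, rfl⟩ := hv
    obtain ⟨n, a', b', c', rfl⟩ := hw
    exact ⟨m + n, Fin.append a a', Fin.append b b', Fin.append c c', by simp [Fin.sum_univ_add]⟩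

namespace QuasiBialgebra

variable {k H : Type*} [Field k] [Ring H] [Algebra k H] (Q : QuasiBialgebra k H)
  (A : Type*) {B : Type*} [Semiring A] [Algebra k A] [Semiring B] [Algebra k B]

/-- The algebra map `Δ ⊗ id_A`, reassociated to the right. -/
noncomputable def comulHead : H ⊗[k] A →ₐ[k] H ⊗[k] (H ⊗[k] A) :=
  (Algebra.TensorProduct.assoc k k k H H A).toAlgHom.comp
    (Algebra.TensorProduct.map Q.comul (AlgHom.id k A))

/-- The algebra map `ε ⊗ id_A`, with `k ⊗ A` identified with `A`. -/
noncomputable def counitHead : H ⊗[k] A →ₐ[k] A :=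
  (Algebra.TensorProduct.lid k A).toAlgHom.comp
    (Algebra.TensorProduct.map Q.counit (AlgHom.id k A))

/-- The algebra map `id ⊗ ε`, with `H ⊗ k` identified with `H`. -/
noncomputable def counitLast : H ⊗[k] H →ₐ[k] H :=
  (Algebra.TensorProduct.rid k k H).toAlgHom.comp (lTensorAlgHom H Q.counit)

variable {A}

@[simp] theorem comulHead_tmul (h : H) (a : A) :
    Q.comulHead A (h ⊗ₜ a) = Algebra.TensorProduct.assoc k k k H H A (Q.comul h ⊗ₜ a) := by
  simp [comulHead]

@[simp] theorem counitHead_tmul (h : H) (a : A) :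
    Q.counitHead A (h ⊗ₜ a) = Q.counit h • a := by
  simp [counitHead]

@[simp] theorem counitLast_tmul (h h' : H) :
    Q.counitLast (h ⊗ₜ h') = Q.counit h' • h := by
  simp [counitLast]

@[simp] theorem counitHead_comul (h : H) : Q.counitHead H (Q.comul h) = h := by
  simp [counitHead, Q.counit_comul_left]

@[simp] theorem counitLast_comul (h : H) : Q.counitLast (Q.comul h) = h := by
  simp [counitLast, Q.counit_comul_right]

theorem lTensor_lTensor_comulHead (f : A →ₗ[k] B) (u : H ⊗[k] A) :
    (f.lTensor H).lTensor H (Q.comulHead A u) = Q.comulHead B (f.lTensor H u) := by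
  induction u with
  | zero => simp
  | add u v hu hv => simp only [map_add, hu, hv]
  | tmul h a =>
    simpa using! TensorProduct.map_map_assoc LinearMap.id LinearMap.id f (Q.comul h ⊗ₜ a)

theorem map_map_comulHead (f : A →ₐ[k] B) (u : H ⊗[k] A) :
    lTensorAlgHom H (lTensorAlgHom H f) (Q.comulHead A u)
      = Q.comulHead B (lTensorAlgHom H f u) :=
  Q.lTensor_lTensor_comulHead f.toLinearMap u

theorem map_counitHead_comulHead (u : H ⊗[k] A) :
    lTensorAlgHom H (Q.counitHead A) (Q.comulHead A u) = u := by
  induction u with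
  | zero => simp
  | add u v hu hv => simp only [map_add, hu, hv]
  | tmul h a =>
    have assoc_contract (v : H ⊗[k] H) :
        lTensorAlgHom H (Q.counitHead A) (Algebra.TensorProduct.assoc k k k H H A (v ⊗ₜ a))
          = Q.counitLast v ⊗ₜ a := by
      induction v with
      | zero => simp
      | add u v hu hv => simp only [map_add, TensorProduct.add_tmul, hu, hv]
      | tmul h h' => simp [TensorProduct.smul_tmul]
    simp [assoc_contract]

theorem map_counitHead_Phi : lTensorAlgHom H (Q.counitHead H) Q.Phi = 1 := by
  have h := congrArg (lTensorAlgHom H (Algebra.TensorProduct.lid k H).toAlgHom) Q.counit_Phi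
  rwa [← AlgHom.comp_apply, ← Algebra.TensorProduct.map_id_comp, map_one] at h

theorem pentagon_comulHead :
    (1 ⊗ₜ[k] Q.Phi) * lTensorAlgHom H (Q.comulHead H) Q.Phi
        * lTensorAlgHom H (lTensorAlgHom H Algebra.TensorProduct.includeLeft) Q.Phi
      = lTensorAlgHom H (lTensorAlgHom H Q.comul) Q.Phi * Q.comulHead (H ⊗[k] H) Q.Phi :=
  Q.pentagon

/-- The image of `Φ` under an algebra map, as a unit; this lets the pentagon be rearranged in a
group. -/
noncomputable def mapPhi (f : H ⊗[k] (H ⊗[k] H) →ₐ[k] A) : Aˣ where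
  val := f Q.Phi
  inv := f Q.PhiInv
  val_inv := by rw [← map_mul, Q.Phi_mul_inv, map_one]
  inv_val := by rw [← map_mul, Q.inv_mul_Phi, map_one]

theorem mapPhi_pentagon :
    Q.mapPhi Algebra.TensorProduct.includeRight * Q.mapPhi (lTensorAlgHom H (Q.comulHead H))
        * Q.mapPhi (lTensorAlgHom H (lTensorAlgHom H Algebra.TensorProduct.includeLeft))
      = Q.mapPhi (lTensorAlgHom H (lTensorAlgHom H Q.comul))
        * Q.mapPhi (Q.comulHead (H ⊗[k] H)) :=
  Units.ext Q.pentagon_comulHead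

theorem map_comulHead_PhiInv_mul_one_tmul_PhiInv :
    lTensorAlgHom H (Q.comulHead H) Q.PhiInv * 1 ⊗ₜ[k] Q.PhiInv
      = lTensorAlgHom H (lTensorAlgHom H Algebra.TensorProduct.includeLeft) Q.Phi
        * Q.comulHead (H ⊗[k] H) Q.PhiInv
        * lTensorAlgHom H (lTensorAlgHom H Q.comul) Q.PhiInv := by
  have h := congrArg (·⁻¹) (eq_mul_inv_of_mul_eq Q.mapPhi_pentagon)
  simp only [mul_inv_rev, inv_inv, ← mul_assoc] at h
  exact congrArg Units.val h

theorem comulHead_Phi_mul_PhiInv :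
    Q.comulHead (H ⊗[k] H) Q.Phi
        * lTensorAlgHom H (lTensorAlgHom H Algebra.TensorProduct.includeLeft) Q.PhiInv
      = lTensorAlgHom H (lTensorAlgHom H Q.comul) Q.PhiInv * (1 ⊗ₜ[k] Q.Phi)
        * lTensorAlgHom H (Q.comulHead H) Q.Phi := by
  have h := eq_mul_inv_of_mul_eq Q.mapPhi_pentagon
  rw [mul_assoc] at h
  have h' := eq_inv_mul_of_mul_eq h.symm
  rw [← mul_assoc] at h'
  exact congrArg Units.val h'

theorem map_PhiInv_eq_one {f : H ⊗[k] (H ⊗[k] H) →ₐ[k] A} (hf : f Q.Phi = 1) :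
    f Q.PhiInv = 1 :=
  congrArg Units.val (inv_eq_one.mpr (Units.ext hf : Q.mapPhi f = 1))

-- Applying `ε` to the last two legs of the pentagon shows that `(id ⊗ id ⊗ ε)(Φ)` is
-- idempotent, and an idempotent unit is `1`.
theorem map_counitLast_Phi : lTensorAlgHom H Q.counitLast Q.Phi = 1 := by
  let c : H ⊗[k] (H ⊗[k] H) →ₐ[k] H := Q.counitLast.comp (lTensorAlgHom H (Q.counitHead H))
  have c_comulHead : c.comp (Q.comulHead H) = Q.counitLast :=
    AlgHom.ext fun u ↦ by rw [AlgHom.comp_apply, AlgHom.comp_apply, map_counitHead_comulHead]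
  have c_comul : c.comp (lTensorAlgHom H Q.comul) = Q.counitLast := by
    ext <;> simp [c]
  have c_includeLeft :
      c.comp (lTensorAlgHom H Algebra.TensorProduct.includeLeft) = Q.counitLast := by
    ext <;> simp [c]
  have c_Phi : lTensorAlgHom H c (1 ⊗ₜ Q.Phi) = 1 := by
    simp [c, map_counitHead_Phi, Algebra.TensorProduct.one_def]
  have c_comulHead_Phi : lTensorAlgHom H c (Q.comulHead (H ⊗[k] H) Q.Phi) = 1 := by
    rw [← lTensorAlgHom_lTensorAlgHom, map_map_comulHead, map_counitHead_Phi, map_one, map_one]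
  have idempotent := congrArg (lTensorAlgHom H c) Q.pentagon_comulHead
  simp only [map_mul, lTensorAlgHom_lTensorAlgHom, c_comulHead, c_comul, c_includeLeft, c_Phi,
    c_comulHead_Phi, one_mul, mul_one] at idempotent
  exact congrArg Units.val (mul_eq_left.mp (Units.ext idempotent :
    Q.mapPhi (lTensorAlgHom H Q.counitLast) * Q.mapPhi _ = Q.mapPhi _))

theorem map_map_counit_Phi :
    lTensorAlgHom H (lTensorAlgHom H ((Algebra.ofId k H).comp Q.counit)) Q.Phi = 1 := by
  have factor : lTensorAlgHom H ((Algebra.ofId k H).comp Q.counit)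
      = Algebra.TensorProduct.includeLeft.comp Q.counitLast := by
    ext <;> simp [Algebra.algebraMap_eq_smul_one]
  rw [factor, ← lTensorAlgHom_lTensorAlgHom, map_counitLast_Phi, map_one]

end QuasiBialgebra

namespace QuasiHopfAlgebra

variable {k H : Type*} [Field k] [Ring H] [Algebra k H] (Q : QuasiHopfAlgebra k H)

/-- The linear map `a ⊗ b ↦ S(a)αb`. -/
noncomputable def contractAlpha : H ⊗[k] H →ₗ[k] H :=
  LinearMap.mul' k H ∘ₗ TensorProduct.map (LinearMap.mulRight k Q.alpha ∘ₗ Q.S) LinearMap.id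

/-- The linear map `a ⊗ b ↦ aβS(b)`. -/
noncomputable def contractBeta : H ⊗[k] H →ₗ[k] H :=
  LinearMap.mul' k H ∘ₗ TensorProduct.map (LinearMap.mulRight k Q.beta) Q.S

/-- The linear map `a ⊗ b ⊗ c ↦ aβS(b)αc`. -/
noncomputable def contractBetaAlpha : H ⊗[k] (H ⊗[k] H) →ₗ[k] H :=
  LinearMap.mul' k H ∘ₗ TensorProduct.map (LinearMap.mulRight k Q.beta) Q.contractAlpha

@[simp] theorem contractAlpha_tmul (a b : H) :
    Q.contractAlpha (a ⊗ₜ b) = Q.S a * Q.alpha * b := by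
  simp [contractAlpha]

@[simp] theorem contractBeta_tmul (a b : H) :
    Q.contractBeta (a ⊗ₜ b) = a * Q.beta * Q.S b := by
  simp [contractBeta]

@[simp] theorem contractBetaAlpha_tmul (a : H) (w : H ⊗[k] H) :
    Q.contractBetaAlpha (a ⊗ₜ w) = a * Q.beta * Q.contractAlpha w := by
  simp [contractBetaAlpha]

theorem contractAlpha_comul (h : H) :
    Q.contractAlpha (Q.comul h) = Q.counit h • Q.alpha := by
  obtain ⟨n, a, b, hab⟩ := TensorProduct.exists_sum_tmul_eq (Q.comul h)
  rw [← Q.antipode_left h n a b hab, hab]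
  simp

theorem contractBeta_comul (h : H) : Q.contractBeta (Q.comul h) = Q.counit h • Q.beta := by
  obtain ⟨n, a, b, hab⟩ := TensorProduct.exists_sum_tmul_eq (Q.comul h)
  rw [← Q.antipode_right h n a b hab, hab]
  simp

theorem contractBetaAlpha_Phi : Q.contractBetaAlpha Q.Phi = 1 := by
  obtain ⟨n, a, b, c, habc⟩ := exists_sum_tmul_tmul_eq_s3 Q.Phi
  rw [← Q.antipode_Phi n a b c habc, habc]
  simp [mul_assoc]

theorem contractAlpha_mul_tmul (w : H ⊗[k] H) (a b : H) :
    Q.contractAlpha (w * a ⊗ₜ b) = Q.S a * Q.contractAlpha w * b := by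
  induction w with
  | zero => simp
  | add v w hv hw => simp only [map_add, mul_add, add_mul, hv, hw]
  | tmul c d => simp [Q.S_mul, mul_assoc]

theorem contractBeta_tmul_mul (a b : H) (w : H ⊗[k] H) :
    Q.contractBeta (a ⊗ₜ b * w) = a * Q.contractBeta w * Q.S b := by
  induction w with
  | zero => simp
  | add v w hv hw => simp only [map_add, mul_add, add_mul, hv, hw]
  | tmul c d => simp [Q.S_mul, mul_assoc]

theorem contractAlpha_comul_mul (h : H) (w : H ⊗[k] H) :
    Q.contractAlpha (Q.comul h * w) = Q.counit h • Q.contractAlpha w := by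
  induction w with
  | zero => simp
  | add v w hv hw => simp only [map_add, mul_add, smul_add, hv, hw]
  | tmul a b => simp [contractAlpha_mul_tmul, contractAlpha_comul]

theorem contractBeta_mul_comul (w : H ⊗[k] H) (h : H) :
    Q.contractBeta (w * Q.comul h) = Q.counit h • Q.contractBeta w := by
  induction w with
  | zero => simp
  | add v w hv hw => simp only [map_add, add_mul, smul_add, hv, hw]
  | tmul a b => simp [contractBeta_tmul_mul, contractBeta_comul]

theorem contractBetaAlpha_map_comul_mul (u : H ⊗[k] H) (w : H ⊗[k] (H ⊗[k] H)) :
    Q.contractBetaAlpha (lTensorAlgHom H Q.comul u * w)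
      = Q.counitLast u * Q.contractBetaAlpha w := by
  induction u with
  | zero => simp
  | add u v hu hv => simp only [map_add, add_mul, hu, hv]
  | tmul a b =>
    induction w with
    | zero => simp
    | add v w hv hw => simp only [map_add, mul_add, hv, hw]
    | tmul c v => simp [contractAlpha_comul_mul, mul_assoc]

theorem contractBetaAlpha_tmul_mul_assoc (a c : H) (v w : H ⊗[k] H) :
    Q.contractBetaAlpha (a ⊗ₜ w * Algebra.TensorProduct.assoc k k k H H H (v ⊗ₜ c))
      = a * Q.contractBeta v * Q.contractAlpha w * c := by
  induction v with
  | zero => simp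
  | add u v hu hv => simp only [map_add, TensorProduct.add_tmul, mul_add, add_mul, hu, hv]
  | tmul b d => simp [contractAlpha_mul_tmul, mul_assoc]

theorem contractBetaAlpha_mul_comulHead (w : H ⊗[k] (H ⊗[k] H)) (u : H ⊗[k] H) :
    Q.contractBetaAlpha (w * Q.comulHead H u) = Q.contractBetaAlpha w * Q.counitHead H u := by
  induction u with
  | zero => simp
  | add u v hu hv => simp only [map_add, mul_add, hu, hv]
  | tmul b c =>
    induction w with
    | zero => simp
    | add v w hv hw => simp only [map_add, add_mul, hv, hw]
    | tmul a v => simp [contractBetaAlpha_tmul_mul_assoc, contractBeta_comul, mul_assoc]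

/-- The element `p_R = x¹ ⊗ x²βS(x³)`, the companion of `q_R`. -/
noncomputable def pR : H ⊗[k] H := Q.contractBeta.lTensor H Q.PhiInv

theorem contractBetaAlpha_tmul_tmul_mul (a b c : H) (w : H ⊗[k] H) :
    Q.contractBetaAlpha
        (a ⊗ₜ (b ⊗ₜ c) * lTensorAlgHom H Algebra.TensorProduct.includeLeft w)
      = a * Q.contractBeta w * (Q.S b * Q.alpha * c) := by
  induction w with
  | zero => simp
  | add v w hv hw => simp only [map_add, mul_add, add_mul, hv, hw]
  | tmul p q => simp [Q.S_mul, mul_assoc]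

theorem lTensor_contractBetaAlpha_assoc_mul (v : H ⊗[k] H) (b c : H) (w : H ⊗[k] (H ⊗[k] H)) :
    Q.contractBetaAlpha.lTensor H
        (Algebra.TensorProduct.assoc k k k H H (H ⊗[k] H) (v ⊗ₜ (b ⊗ₜ c))
          * lTensorAlgHom H (lTensorAlgHom H Algebra.TensorProduct.includeLeft) w)
      = v * Q.contractBeta.lTensor H w * (1 ⊗ₜ (Q.S b * Q.alpha * c)) := by
  induction v with
  | zero => simp
  | add u v hu hv => simp only [map_add, TensorProduct.add_tmul, add_mul, hu, hv]
  | tmul p q =>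
    induction w with
    | zero => simp
    | add v w hv hw => simp only [map_add, mul_add, add_mul, hv, hw]
    | tmul a u => simp [contractBetaAlpha_tmul_tmul_mul]

theorem lTensor_contractBetaAlpha_comulHead_Phi_mul :
    Q.contractBetaAlpha.lTensor H (Q.comulHead (H ⊗[k] H) Q.Phi
        * lTensorAlgHom H (lTensorAlgHom H Algebra.TensorProduct.includeLeft) Q.PhiInv) = 1 := by
  rw [Q.comulHead_Phi_mul_PhiInv, lTensor_mul_map Q.contractBetaAlpha_mul_comulHead,
    lTensor_map_mul Q.contractBetaAlpha_map_comul_mul, Q.map_counitHead_Phi,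
    Q.map_PhiInv_eq_one Q.map_counitLast_Phi]
  simp [contractBetaAlpha_Phi, Algebra.TensorProduct.one_def]

theorem sum_comul_mul_pR_mul_eq_one {ι : Type*} [Fintype ι] {X1 X2 X3 : ι → H}
    (hX : Q.Phi = ∑ i, X1 i ⊗ₜ[k] (X2 i ⊗ₜ[k] X3 i)) :
    ∑ i, Q.comul (X1 i) * Q.pR * (1 ⊗ₜ Q.S (Q.Sinv (Q.alpha * X3 i) * X2 i)) = 1 := by
  rw [← Q.lTensor_contractBetaAlpha_comulHead_Phi_mul, hX, map_sum, Finset.sum_mul, map_sum]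
  simp [lTensor_contractBetaAlpha_assoc_mul, pR, Q.S_mul, Q.S_Sinv, mul_assoc]

theorem contractBeta_includeLeft_mul (a : H) (w : H ⊗[k] H) :
    Q.contractBeta (Algebra.TensorProduct.includeLeft (R := k) (S := k) a * w)
      = a * Q.contractBeta w := by
  simp [contractBeta_tmul_mul, Q.S_one]

theorem lTensor_lTensor_contractBeta_map_includeLeft_mul (p : H ⊗[k] (H ⊗[k] H))
    (w : H ⊗[k] (H ⊗[k] (H ⊗[k] H))) :
    (Q.contractBeta.lTensor H).lTensor H
        (lTensorAlgHom H (lTensorAlgHom H Algebra.TensorProduct.includeLeft) p * w)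
      = p * (Q.contractBeta.lTensor H).lTensor H w := by
  rw [lTensor_map_mul (lTensor_map_mul (g' := AlgHom.id k H) Q.contractBeta_includeLeft_mul),
    lTensorAlgHom_id, lTensorAlgHom_id, AlgHom.id_apply]

theorem lTensor_lTensor_contractBeta_mul_map_comul (w : H ⊗[k] (H ⊗[k] (H ⊗[k] H)))
    (v : H ⊗[k] (H ⊗[k] H)) :
    (Q.contractBeta.lTensor H).lTensor H (w * lTensorAlgHom H (lTensorAlgHom H Q.comul) v)
      = (Q.contractBeta.lTensor H).lTensor H w
        * lTensorAlgHom H (lTensorAlgHom H ((Algebra.ofId k H).comp Q.counit)) v := by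
  have contract (w : H ⊗[k] H) (h : H) : Q.contractBeta (w * Q.comul h)
      = Q.contractBeta w * (Algebra.ofId k H).comp Q.counit h := by
    simp [contractBeta_mul_comul, Algebra.ofId_apply, Algebra.algebraMap_eq_smul_one]
  exact lTensor_mul_map (lTensor_mul_map contract) w v

theorem lTensor_lTensor_contractBeta_map_comulHead_PhiInv_mul :
    (Q.contractBeta.lTensor H).lTensor H
        (lTensorAlgHom H (Q.comulHead H) Q.PhiInv * 1 ⊗ₜ[k] Q.PhiInv)
      = Q.Phi * Q.comulHead H Q.pR := by
  rw [Q.map_comulHead_PhiInv_mul_one_tmul_PhiInv, lTensor_lTensor_contractBeta_mul_map_comul,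
    Q.map_PhiInv_eq_one Q.map_map_counit_Phi, mul_one,
    lTensor_lTensor_contractBeta_map_includeLeft_mul, Q.lTensor_lTensor_comulHead, pR]

theorem Phi_mul_comulHead_pR_eq_sum {ι κ μ : Type*} [Fintype ι] [Fintype κ] [Fintype μ]
    {t1 t2 t3 : ι → H} {t21 t22 : ι → κ → H} {z1 z2 z3 : μ → H}
    (ht : Q.PhiInv = ∑ i, t1 i ⊗ₜ[k] (t2 i ⊗ₜ[k] t3 i))
    (ht2 : ∀ i, Q.comul (t2 i) = ∑ j, t21 i j ⊗ₜ[k] t22 i j)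
    (hz : Q.PhiInv = ∑ i, z1 i ⊗ₜ[k] (z2 i ⊗ₜ[k] z3 i)) :
    Q.Phi * Q.comulHead H Q.pR
      = ∑ i, ∑ j, ∑ l, t1 i ⊗ₜ[k] ((t21 i j * z1 l)
          ⊗ₜ[k] (t22 i j * z2 l * Q.beta * Q.S (t3 i * z3 l))) := by
  have map_comulHead_PhiInv : lTensorAlgHom H (Q.comulHead H) Q.PhiInv
      = ∑ i, ∑ j, t1 i ⊗ₜ[k] (t21 i j ⊗ₜ[k] (t22 i j ⊗ₜ[k] t3 i)) := by
    simp [ht, ht2, TensorProduct.sum_tmul, TensorProduct.tmul_sum]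
  have one_tmul_PhiInv : (1 : H) ⊗ₜ[k] Q.PhiInv
      = ∑ l, 1 ⊗ₜ[k] (z1 l ⊗ₜ[k] (z2 l ⊗ₜ[k] z3 l)) := by
    rw [hz, TensorProduct.tmul_sum]
  rw [← lTensor_lTensor_contractBeta_map_comulHead_PhiInv_mul, map_comulHead_PhiInv,
    one_tmul_PhiInv]
  simp only [Finset.sum_mul]
  simp only [Finset.mul_sum, map_sum]
  simp

theorem map_comul_comul_mul_Phi_mul (h : H) (w : H ⊗[k] H) :
    lTensorAlgHom H Q.comul (Q.comul h) * (Q.Phi * Q.comulHead H w)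
      = Q.Phi * Q.comulHead H (Q.comul h * w) := by
  have coassoc : lTensorAlgHom H Q.comul (Q.comul h)
      = Q.Phi * Q.comulHead H (Q.comul h) * Q.PhiInv := Q.comul_coassoc h
  rw [coassoc, map_mul, mul_assoc, ← mul_assoc Q.PhiInv, Q.inv_mul_Phi, one_mul, mul_assoc]

theorem sum_map_comul_comul_mul_eq_one {ι : Type*} [Fintype ι] {X1 X2 X3 : ι → H}
    (hX : Q.Phi = ∑ i, X1 i ⊗ₜ[k] (X2 i ⊗ₜ[k] X3 i)) :
    ∑ i, lTensorAlgHom H Q.comul (Q.comul (X1 i)) * (Q.Phi * Q.comulHead H Q.pR)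
      * (1 ⊗ₜ (1 ⊗ₜ Q.S (Q.Sinv (Q.alpha * X3 i) * X2 i))) * Q.PhiInv = 1 := by
  have one_tmul_one_tmul (y : H) : (1 : H) ⊗ₜ[k] ((1 : H) ⊗ₜ[k] y) = Q.comulHead H (1 ⊗ₜ y) := by
    simp [Algebra.TensorProduct.one_def]
  simp only [map_comul_comul_mul_Phi_mul, one_tmul_one_tmul, mul_assoc Q.Phi, ← map_mul]
  rw [← Finset.mul_sum, ← Finset.sum_mul, ← map_sum, Q.sum_comul_mul_pR_mul_eq_one hX, map_one,
    one_mul, Q.Phi_mul_inv]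

end QuasiHopfAlgebra

/-- Lemma 3:
`q¹₁t¹x¹ ⊗ q¹₍₂,₁₎t²₁z¹x² ⊗ q¹₍₂,₂₎t²₂z²βS(q²t³z³)x³ = 1 ⊗ 1 ⊗ 1`, where
`q_R = q¹ ⊗ q² = X¹ ⊗ S⁻¹(αX³)X²` and `x, t, z` are three copies of `Φ⁻¹`.  All Sweedler
components are handled via universally quantified finite representations. -/
theorem statement3 {k H : Type*} [Field k] [Ring H] [Algebra k H]
    (Q : QuasiHopfAlgebra k H) :
    ∀ (nq : ℕ) (Xq1 Xq2 Xq3 : Fin nq → H),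
      Q.Phi = ∑ i, Xq1 i ⊗ₜ[k] (Xq2 i ⊗ₜ[k] Xq3 i) →
    ∀ (mq : ℕ) (A1 A2 A3 : Fin nq → Fin mq → H),
      (∀ i, (Algebra.TensorProduct.map (AlgHom.id k H) Q.comul) (Q.comul (Xq1 i))
          = ∑ j, A1 i j ⊗ₜ[k] (A2 i j ⊗ₜ[k] A3 i j)) →
    ∀ (nt : ℕ) (t1 t2 t3 : Fin nt → H),
      Q.PhiInv = ∑ i, t1 i ⊗ₜ[k] (t2 i ⊗ₜ[k] t3 i) →
    ∀ (mt : ℕ) (t21 t22 : Fin nt → Fin mt → H),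
      (∀ i, Q.comul (t2 i) = ∑ j, t21 i j ⊗ₜ[k] t22 i j) →
    ∀ (nz : ℕ) (z1 z2 z3 : Fin nz → H),
      Q.PhiInv = ∑ i, z1 i ⊗ₜ[k] (z2 i ⊗ₜ[k] z3 i) →
    ∀ (nx : ℕ) (x1 x2 x3 : Fin nx → H),
      Q.PhiInv = ∑ i, x1 i ⊗ₜ[k] (x2 i ⊗ₜ[k] x3 i) →
    (∑ i, ∑ j, ∑ it, ∑ jt, ∑ iz, ∑ ix,
      (A1 i j * t1 it * x1 ix)
        ⊗ₜ[k] ((A2 i j * t21 it jt * z1 iz * x2 ix)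
          ⊗ₜ[k] (A3 i j * t22 it jt * z2 iz * Q.beta
            * Q.S (Q.Sinv (Q.alpha * Xq3 i) * Xq2 i * t3 it * z3 iz) * x3 ix)))
      = (1 : H ⊗[k] (H ⊗[k] H)) := by
  intro nq X1 X2 X3 hX mq A1 A2 A3 hA nt t1 t2 t3 ht mt t21 t22 ht2 nz z1 z2 z3 hz nx x1 x2 x3 hx
  rw [← Q.sum_map_comul_comul_mul_eq_one hX]
  refine Finset.sum_congr rfl fun i _ ↦ ?_
  rw [hA i, Q.Phi_mul_comulHead_pR_eq_sum ht ht2 hz]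
  generalize Q.PhiInv = w at hx
  subst hx
  simp only [Finset.sum_mul, mul_assoc]
  simp only [Finset.mul_sum]
  simp [Q.S_mul, mul_assoc]
end
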